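/- Under the hypotheses of Theorem 2, set Σ := (1/4)∑_{m∈𝓜} f(m) + O(Y(M+log X)/X · ∑ f(n)) and suppose Σ > 0. Then for any 0 < V ≤ Σ, meas{ x ∈ [Y, 2^M X] : Re(F(x)) ≥ V } ≥ (Σ − V) X / (2(M log 2 + log X) · max_{x ∈ [Y, 2^M X]} |F(x)|). -/

import Mathlib

set_option autoImplicit false

open Real MeasureTheory

/-!
The resonator is a Riesz product `R = ∏ (1 + cos (2π λ_m x))` over `m ∈ 𝓜`, integrated against the
Fejér weight `1 - x / T` on `[0, T]`, where `T = 2 ^ M * X`. The cosine transform of this weight is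
nonnegative, and multiplication by `1 + cos` preserves that. Hence all frequencies of `F` contribute
nonnegatively to `∫ Re F · R`, while each `m ∈ 𝓜` contributes at least `f m / 2` times the mass
`∫ R ≥ T / 2`. On the other hand `R ≤ 2 ^ M`, so the part of the integral where `Re F ≥ V` is at
most `2 ^ M * max |F|` times the measure of that set; the factor `2 ^ M` cancels against `T`.
-/

section TrigSeries

variable {ι : Type*} {f : ι → ℝ}

/-- The series `F(x) = ∑ f(n) e^{2πi λ_n x}`, over an arbitrary index type. -/
noncomputable def trigSeries (lam f : ι → ℝ) (x : ℝ) : ℂ :=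
  ∑' n, (f n : ℂ) * Complex.exp (2 * π * Complex.I * lam n * x)

lemma trigSeries_term_eq (lam f : ι → ℝ) (n : ι) (x : ℝ) :
    (f n : ℂ) * Complex.exp (2 * π * Complex.I * lam n * x) =
      f n * Complex.exp ((2 * π * lam n * x : ℝ) * Complex.I) := by
  push_cast
  ring_nf

lemma norm_trigSeries_term (lam : ι → ℝ) (hf : ∀ n, 0 ≤ f n) (n : ι) (x : ℝ) :
    ‖(f n : ℂ) * Complex.exp (2 * π * Complex.I * lam n * x)‖ = f n := by
  rw [trigSeries_term_eq, norm_mul, Complex.norm_exp_ofReal_mul_I, mul_one,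
    Complex.norm_of_nonneg (hf n)]

lemma continuous_trigSeries (lam : ι → ℝ) (hf : ∀ n, 0 ≤ f n) (hfs : Summable f) :
    Continuous (trigSeries lam f) :=
  continuous_tsum (fun n => by fun_prop) hfs fun n x => (norm_trigSeries_term lam hf n x).le

lemma norm_trigSeries_le (lam : ι → ℝ) (hf : ∀ n, 0 ≤ f n) (hfs : Summable f) (x : ℝ) :
    ‖trigSeries lam f x‖ ≤ ∑' n, f n :=
  tsum_of_norm_bounded hfs.hasSum fun n => (norm_trigSeries_term lam hf n x).le

lemma re_trigSeries (lam : ι → ℝ) (hf : ∀ n, 0 ≤ f n) (hfs : Summable f) (x : ℝ) :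
    (trigSeries lam f x).re = ∑' n, f n * cos (2 * π * lam n * x) := by
  have hsum : Summable fun n => (f n : ℂ) * Complex.exp (2 * π * Complex.I * lam n * x) :=
    .of_norm_bounded hfs fun n => (norm_trigSeries_term lam hf n x).le
  simp_rw [trigSeries, Complex.re_tsum hsum, trigSeries_term_eq, Complex.re_ofReal_mul,
    Complex.exp_ofReal_mul_I_re]

lemma hasSum_integral_re_trigSeries_mul [Countable ι] {μ : Measure ℝ} (lam : ι → ℝ)
    (hf : ∀ n, 0 ≤ f n) (hfs : Summable f) {R : ℝ → ℝ} (hR : Integrable R μ) :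
    HasSum (fun n => f n * ∫ x, R x * cos (2 * π * lam n * x) ∂μ)
      (∫ x, (trigSeries lam f x).re * R x ∂μ) := by
  have hint (n : ι) : Integrable (fun x => f n * (R x * cos (2 * π * lam n * x))) μ :=
    (hR.mul_bdd (c := 1) (by fun_prop) (.of_forall fun x => abs_cos_le_one _)).const_mul _
  have hnorm (n : ι) : ∫ x, ‖f n * (R x * cos (2 * π * lam n * x))‖ ∂μ ≤
      f n * ∫ x, ‖R x‖ ∂μ := by
    rw [← integral_const_mul]
    refine integral_mono (hint n).norm (hR.norm.const_mul _) fun x => ?_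
    rw [norm_mul, norm_mul, norm_of_nonneg (hf n)]
    exact mul_le_mul_of_nonneg_left
      (mul_le_of_le_one_right (norm_nonneg _) (abs_cos_le_one _)) (hf n)
  have hterm (x : ℝ) : (trigSeries lam f x).re * R x =
      ∑' n, f n * (R x * cos (2 * π * lam n * x)) := by
    rw [re_trigSeries lam hf hfs, ← tsum_mul_right]
    exact tsum_congr fun n => by ring
  simp_rw [hterm, ← integral_const_mul]
  exact hasSum_integral_of_summable_integral_norm hint
    (.of_nonneg_of_le (fun n => integral_nonneg fun x => norm_nonneg _) hnorm (hfs.mul_right _))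

end TrigSeries

section RieszProduct

variable {ι : Type*}

/-- The Riesz product `∏ (1 + cos (θ_m x))`, which serves as the resonator. -/
noncomputable def rieszProduct (θ : ι → ℝ) (s : Finset ι) (x : ℝ) : ℝ :=
  ∏ m ∈ s, (1 + cos (θ m * x))

lemma rieszProduct_insert [DecidableEq ι] (θ : ι → ℝ) {s : Finset ι} {m : ι} (hm : m ∉ s) (x : ℝ) :
    rieszProduct θ (insert m s) x = (1 + cos (θ m * x)) * rieszProduct θ s x :=
  Finset.prod_insert hm

lemma rieszProduct_nonneg (θ : ι → ℝ) (s : Finset ι) (x : ℝ) : 0 ≤ rieszProduct θ s x :=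
  Finset.prod_nonneg fun m _ => by linarith [neg_one_le_cos (θ m * x)]

lemma rieszProduct_le (θ : ι → ℝ) (s : Finset ι) (x : ℝ) : rieszProduct θ s x ≤ 2 ^ s.card :=
  (Finset.prod_le_prod (fun m _ => by linarith [neg_one_le_cos (θ m * x)])
    (fun m _ => by linarith [cos_le_one (θ m * x)])).trans_eq (Finset.prod_const 2)

@[fun_prop]
lemma continuous_rieszProduct (θ : ι → ℝ) (s : Finset ι) : Continuous (rieszProduct θ s) := by
  unfold rieszProduct
  fun_prop

variable {μ : Measure ℝ} [IsFiniteMeasure μ]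

lemma integrable_rieszProduct (θ : ι → ℝ) (s : Finset ι) : Integrable (rieszProduct θ s) μ :=
  .of_bound (by fun_prop) (2 ^ s.card) <| .of_forall fun x => by
    rw [norm_of_nonneg (rieszProduct_nonneg θ s x)]
    exact rieszProduct_le θ s x

lemma integrable_rieszProduct_mul_cos (θ : ι → ℝ) (s : Finset ι) (a : ℝ) :
    Integrable (fun x => rieszProduct θ s x * cos (a * x)) μ :=
  (integrable_rieszProduct θ s).mul_bdd (c := 1) (by fun_prop)
    (.of_forall fun x => abs_cos_le_one _)

/-- The real part of the characteristic function of `μ` takes no negative value. This is the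
property of a weight that lets off-resonance frequencies be discarded from a lower bound. -/
def CosTransformNonneg (μ : Measure ℝ) : Prop :=
  ∀ a : ℝ, 0 ≤ ∫ x, cos (a * x) ∂μ

namespace CosTransformNonneg

lemma integral_rieszProduct_mul_cos_nonneg (hμ : CosTransformNonneg μ) (θ : ι → ℝ)
    (s : Finset ι) (a : ℝ) : 0 ≤ ∫ x, rieszProduct θ s x * cos (a * x) ∂μ := by
  classical
  induction s using Finset.induction_on generalizing a with
  | empty => simpa only [rieszProduct, Finset.prod_empty, one_mul] using hμ a
  | insert m s hm ih =>
    have product_to_sum (x : ℝ) : rieszProduct θ (insert m s) x * cos (a * x) =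
        rieszProduct θ s x * cos (a * x) + (1 / 2 * (rieszProduct θ s x * cos ((a + θ m) * x)) +
          1 / 2 * (rieszProduct θ s x * cos ((a - θ m) * x))) := by
      rw [rieszProduct_insert θ hm, add_mul a, sub_mul a, cos_add, cos_sub]
      ring
    have hint := integrable_rieszProduct_mul_cos (μ := μ) θ s
    simp_rw [product_to_sum]
    rw [integral_add (hint a) (((hint _).const_mul _).fun_add ((hint _).const_mul _)),
      integral_add ((hint _).const_mul _) ((hint _).const_mul _), integral_const_mul,
      integral_const_mul]
    linarith [ih a, ih (a + θ m), ih (a - θ m)]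

lemma measureReal_univ_le_integral_rieszProduct (hμ : CosTransformNonneg μ) (θ : ι → ℝ)
    (s : Finset ι) : μ.real Set.univ ≤ ∫ x, rieszProduct θ s x ∂μ := by
  classical
  induction s using Finset.induction_on with
  | empty => simp [rieszProduct]
  | insert m s hm ih =>
    simp_rw [rieszProduct_insert θ hm, one_add_mul, mul_comm (cos _)]
    rw [integral_add (integrable_rieszProduct θ s) (integrable_rieszProduct_mul_cos θ s _)]
    linarith [hμ.integral_rieszProduct_mul_cos_nonneg θ s (θ m)]

lemma half_integral_rieszProduct_le (hμ : CosTransformNonneg μ) (θ : ι → ℝ) {s : Finset ι}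
    {m : ι} (hm : m ∈ s) :
    1 / 2 * ∫ x, rieszProduct θ s x ∂μ ≤ ∫ x, rieszProduct θ s x * cos (θ m * x) ∂μ := by
  classical
  obtain ⟨t, hmt, rfl⟩ : ∃ t, m ∉ t ∧ insert m t = s :=
    ⟨s.erase m, s.notMem_erase m, Finset.insert_erase hm⟩
  have double_angle (x : ℝ) : rieszProduct θ (insert m t) x * cos (θ m * x) =
      1 / 2 * rieszProduct θ (insert m t) x + (1 / 2 * (rieszProduct θ t x * cos (θ m * x)) +
        1 / 2 * (rieszProduct θ t x * cos (2 * θ m * x))) := by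
    rw [rieszProduct_insert θ hmt, mul_assoc 2, cos_two_mul]
    ring
  have hint (a : ℝ) := (integrable_rieszProduct_mul_cos (μ := μ) θ t a).const_mul (1 / 2)
  simp_rw [double_angle]
  rw [integral_add ((integrable_rieszProduct θ _).const_mul _) ((hint _).fun_add (hint _)),
    integral_add (hint _) (hint _), integral_const_mul, integral_const_mul, integral_const_mul]
  linarith [hμ.integral_rieszProduct_mul_cos_nonneg θ t (θ m),
    hμ.integral_rieszProduct_mul_cos_nonneg θ t (2 * θ m)]

lemma half_sum_mul_integral_rieszProduct_le [Countable ι] (hμ : CosTransformNonneg μ)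
    (lam : ι → ℝ) {f : ι → ℝ} (hf : ∀ n, 0 ≤ f n) (hfs : Summable f) (s : Finset ι) :
    1 / 2 * (∑ m ∈ s, f m) * ∫ x, rieszProduct (fun n => 2 * π * lam n) s x ∂μ ≤
      ∫ x, (trigSeries lam f x).re * rieszProduct (fun n => 2 * π * lam n) s x ∂μ := by
  set θ : ι → ℝ := fun n => 2 * π * lam n
  calc 1 / 2 * (∑ m ∈ s, f m) * ∫ x, rieszProduct θ s x ∂μ
      = ∑ m ∈ s, f m * (1 / 2 * ∫ x, rieszProduct θ s x ∂μ) := by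
        rw [← Finset.sum_mul]
        ring
    _ ≤ ∑ m ∈ s, f m * ∫ x, rieszProduct θ s x * cos (θ m * x) ∂μ :=
        Finset.sum_le_sum fun m hm =>
          mul_le_mul_of_nonneg_left (hμ.half_integral_rieszProduct_le θ hm) (hf m)
    _ ≤ ∫ x, (trigSeries lam f x).re * rieszProduct θ s x ∂μ :=
        sum_le_hasSum s
          (fun n _ => mul_nonneg (hf n) (hμ.integral_rieszProduct_mul_cos_nonneg θ s (θ n)))
          (hasSum_integral_re_trigSeries_mul lam hf hfs (integrable_rieszProduct θ s))

end CosTransformNonneg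

end RieszProduct

section FejerMeasure

variable {T : ℝ}

/-- Lebesgue measure on `[0, T]` weighted by the Fejér density `1 - x / T`. -/
noncomputable def fejerMeasure (T : ℝ) : Measure ℝ :=
  (volume.restrict (Set.Icc 0 T)).withDensity fun x => ENNReal.ofReal (1 - x / T)

lemma fejerMeasure_le_restrict (hT : 0 ≤ T) :
    fejerMeasure T ≤ volume.restrict (Set.Icc 0 T) := by
  refine (withDensity_mono (g := 1) ?_).trans_eq withDensity_one
  filter_upwards [ae_restrict_mem measurableSet_Icc] with x hx
  exact ENNReal.ofReal_le_one.2 (sub_le_self _ (div_nonneg hx.1 hT))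

lemma integral_fejerMeasure (hT : 0 ≤ T) (g : ℝ → ℝ) :
    ∫ x, g x ∂fejerMeasure T = ∫ x in (0 : ℝ)..T, (1 - x / T) * g x := by
  rw [fejerMeasure, integral_withDensity_eq_integral_toReal_smul (by fun_prop) (by simp),
    intervalIntegral.integral_of_le hT, ← integral_Icc_eq_integral_Ioc]
  refine setIntegral_congr_fun measurableSet_Icc fun x hx => ?_
  rw [ENNReal.toReal_ofReal (sub_nonneg.2 (div_le_one_of_le₀ hx.2 hT)), smul_eq_mul]

lemma fejerMeasure_real_univ (hT : 0 < T) : (fejerMeasure T).real Set.univ = T / 2 := by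
  have h := integral_fejerMeasure hT.le fun _ => 1
  simp only [integral_const, smul_eq_mul, mul_one] at h
  rw [h, intervalIntegral.integral_sub (by simp) (Continuous.intervalIntegrable (by fun_prop) _ _)]
  simp only [intervalIntegral.integral_const, intervalIntegral.integral_div, integral_id,
    smul_eq_mul]
  field_simp
  ring

lemma integral_cos_fejerMeasure (hT : 0 < T) {a : ℝ} (ha : a ≠ 0) :
    ∫ x, cos (a * x) ∂fejerMeasure T = (1 - cos (a * T)) / (a ^ 2 * T) := by
  have hderiv (x : ℝ) : HasDerivAt
      (fun x => (1 - x / T) * (sin (a * x) / a) - cos (a * x) / (a ^ 2 * T))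
      ((1 - x / T) * cos (a * x)) x := by
    have hlin : HasDerivAt (fun x : ℝ => a * x) a x := by
      simpa only [mul_one, id_eq] using (hasDerivAt_id x).const_mul a
    have hweight := ((hasDerivAt_id x).div_const T).const_sub 1
    refine ((hweight.mul (hlin.sin.div_const a)).sub
      (hlin.cos.div_const (a ^ 2 * T))).congr_deriv ?_
    simp only [id_eq]
    field_simp
    ring
  rw [integral_fejerMeasure hT.le, intervalIntegral.integral_eq_sub_of_hasDerivAt
    (fun x _ => hderiv x) (Continuous.intervalIntegrable (by fun_prop) _ _), div_self hT.ne']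
  simp only [mul_zero, cos_zero, sin_zero, zero_div]
  ring

lemma cosTransformNonneg_fejerMeasure (hT : 0 < T) : CosTransformNonneg (fejerMeasure T) := by
  intro a
  rcases eq_or_ne a 0 with rfl | ha
  · exact integral_nonneg fun x => by simp
  · rw [integral_cos_fejerMeasure hT ha]
    exact div_nonneg (sub_nonneg.2 (cos_le_one _)) (by positivity)

end FejerMeasure

lemma integral_mul_le_of_le_off {α : Type*} [MeasurableSpace α] {μ : Measure α}
    [IsFiniteMeasure μ] {G R : α → ℝ} {P E : Set α} {V S A B : ℝ} (hP : MeasurableSet P)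
    (hE : MeasurableSet E) (hR : Integrable R μ) (hGR : Integrable (fun x => G x * R x) μ)
    (hV : 0 ≤ V) (hS : 0 ≤ S) (hA : 0 ≤ A) (hR0 : ∀ x, 0 ≤ R x) (hRB : ∀ x, R x ≤ B)
    (hGP : ∀ x ∈ P, G x ≤ S) (hGE : ∀ x ∈ E, G x ≤ A)
    (hGV : ∀ᵐ x ∂μ, x ∉ P → x ∉ E → G x ≤ V) :
    ∫ x, G x * R x ∂μ ≤ V * ∫ x, R x ∂μ + (S * B * μ.real P + A * B * μ.real E) := by
  have hind {D : Set α} (hD : MeasurableSet D) (c : ℝ) :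
      Integrable (D.indicator fun _ => c) μ := (integrable_const c).indicator hD
  have hpointwise : ∀ᵐ x ∂μ, G x * R x ≤
      V * R x + (P.indicator (fun _ => S * B) x + E.indicator (fun _ => A * B) x) := by
    filter_upwards [hGV] with x hx
    have hB : 0 ≤ B := (hR0 x).trans (hRB x)
    have hVR := mul_nonneg hV (hR0 x)
    have hIP : 0 ≤ P.indicator (fun _ => S * B) x :=
      Set.indicator_nonneg (fun _ _ => mul_nonneg hS hB) x
    have hIE : 0 ≤ E.indicator (fun _ => A * B) x :=
      Set.indicator_nonneg (fun _ _ => mul_nonneg hA hB) x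
    by_cases hxP : x ∈ P
    · have := mul_le_mul (hGP x hxP) (hRB x) (hR0 x) hS
      rw [Set.indicator_of_mem hxP]
      linarith
    by_cases hxE : x ∈ E
    · have := mul_le_mul (hGE x hxE) (hRB x) (hR0 x) hA
      rw [Set.indicator_of_mem hxE]
      linarith
    · linarith [mul_le_mul_of_nonneg_right (hx hxP hxE) (hR0 x)]
  calc ∫ x, G x * R x ∂μ
      ≤ ∫ x, V * R x + (P.indicator (fun _ => S * B) x + E.indicator (fun _ => A * B) x) ∂μ :=
        integral_mono_ae hGR ((hR.const_mul V).fun_add ((hind hP _).fun_add (hind hE _))) hpointwise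
    _ = V * ∫ x, R x ∂μ + (S * B * μ.real P + A * B * μ.real E) := by
        rw [integral_add (hR.const_mul V) ((hind hP _).fun_add (hind hE _)),
          integral_add (hind hP _) (hind hE _), integral_const_mul, integral_indicator_const _ hP,
          integral_indicator_const _ hE, smul_eq_mul, smul_eq_mul, mul_comm (μ.real P),
          mul_comm (μ.real E)]

section Resonance

variable {ι : Type*} {lam f : ι → ℝ} {Y V : ℝ}

lemma integral_re_trigSeries_mul_rieszProduct_le {T : ℝ} (hf : ∀ n, 0 ≤ f n) (hfs : Summable f)
    (θ : ι → ℝ) (s : Finset ι) (hY : 0 ≤ Y) (hYT : Y ≤ T) (hV : 0 ≤ V) :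
    ∫ x, (trigSeries lam f x).re * rieszProduct θ s x ∂fejerMeasure T ≤
      V * ∫ x, rieszProduct θ s x ∂fejerMeasure T + ((∑' n, f n) * 2 ^ s.card * Y +
        sSup ((fun x => ‖trigSeries lam f x‖) '' Set.Icc Y T) * 2 ^ s.card *
          volume.real {x ∈ Set.Icc Y T | V ≤ (trigSeries lam f x).re}) := by
  set A := sSup ((fun x => ‖trigSeries lam f x‖) '' Set.Icc Y T)
  set E := {x ∈ Set.Icc Y T | V ≤ (trigSeries lam f x).re}
  have hcont := continuous_trigSeries lam hf hfs
  have hnorm := norm_trigSeries_le lam hf hfs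
  have hFA : ∀ x ∈ Set.Icc Y T, ‖trigSeries lam f x‖ ≤ A := fun x hx =>
    le_csSup (isCompact_Icc.bddAbove_image hcont.norm.continuousOn) ⟨x, hx, rfl⟩
  have hA : 0 ≤ A := (norm_nonneg _).trans (hFA Y ⟨le_rfl, hYT⟩)
  have hμ := fejerMeasure_le_restrict (hY.trans hYT)
  have : IsFiniteMeasure (fejerMeasure T) := isFiniteMeasure_of_le _ hμ
  have hvol : fejerMeasure T ≤ volume := hμ.trans Measure.restrict_le_self
  have hR := integrable_rieszProduct (μ := fejerMeasure T) θ s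
  have hE : MeasurableSet E := measurableSet_Icc.inter
    (measurableSet_le measurable_const (Complex.continuous_re.comp hcont).measurable)
  have hE_finite : volume E ≠ ⊤ :=
    measure_ne_top_of_subset (Set.sep_subset _ _) measure_Icc_lt_top.ne
  have hGV : ∀ᵐ x ∂fejerMeasure T, x ∉ Set.Icc 0 Y → x ∉ E → (trigSeries lam f x).re ≤ V := by
    filter_upwards [hμ.absolutelyContinuous (ae_restrict_mem measurableSet_Icc)] with x hx hxY hxE
    have hYx : Y < x := not_le.1 fun h => hxY ⟨hx.1, h⟩
    exact (not_le.1 fun h => hxE ⟨⟨hYx.le, hx.2⟩, h⟩).le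
  refine (integral_mul_le_of_le_off measurableSet_Icc hE hR
    (hR.bdd_mul (c := ∑' n, f n) (by fun_prop)
      (.of_forall fun x => (Complex.abs_re_le_norm _).trans (hnorm x)))
    hV (tsum_nonneg hf) hA (rieszProduct_nonneg θ s) (rieszProduct_le θ s)
    (fun x _ => (Complex.re_le_norm _).trans (hnorm x))
    (fun x hx => (Complex.re_le_norm _).trans (hFA x hx.1)) hGV).trans ?_
  have hmeasure_initial : (fejerMeasure T).real (Set.Icc 0 Y) ≤ Y := by
    refine (ENNReal.toReal_mono measure_Icc_lt_top.ne (hvol _)).trans_eq ?_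
    rw [Real.volume_Icc, sub_zero, ENNReal.toReal_ofReal hY]
  have hmeasure_E : (fejerMeasure T).real E ≤ volume.real E :=
    ENNReal.toReal_mono hE_finite (hvol _)
  have hS : 0 ≤ ∑' n, f n := tsum_nonneg hf
  gcongr

lemma resonance_inequality [Countable ι] {X : ℝ} (hf : ∀ n, 0 ≤ f n) (hfs : Summable f)
    (s : Finset ι) (hX : 0 < X) (hY : 0 ≤ Y) (hYX : Y ≤ 2 ^ s.card * X) (hV : 0 ≤ V)
    (hVs : V ≤ 1 / 2 * ∑ m ∈ s, f m) :
    (1 / 2 * ∑ m ∈ s, f m - V) * X ≤ 2 * (Y * ∑' n, f n +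
      sSup ((fun x => ‖trigSeries lam f x‖) '' Set.Icc Y (2 ^ s.card * X)) *
        volume.real {x ∈ Set.Icc Y (2 ^ s.card * X) | V ≤ (trigSeries lam f x).re}) := by
  set T := 2 ^ s.card * X with hT_def
  set θ : ι → ℝ := fun n => 2 * π * lam n
  have hT : 0 < T := by positivity
  have : IsFiniteMeasure (fejerMeasure T) :=
    isFiniteMeasure_of_le _ (fejerMeasure_le_restrict hT.le)
  have hμ := cosTransformNonneg_fejerMeasure hT
  have hlower := hμ.half_sum_mul_integral_rieszProduct_le lam hf hfs s
  have hupper := integral_re_trigSeries_mul_rieszProduct_le (lam := lam) hf hfs θ s hY hYX hV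
  have hmass : T / 2 ≤ ∫ x, rieszProduct θ s x ∂fejerMeasure T :=
    (fejerMeasure_real_univ hT).symm.trans_le (hμ.measureReal_univ_le_integral_rieszProduct θ s)
  have hmain := mul_le_mul_of_nonneg_left hmass (sub_nonneg.2 hVs)
  refine le_of_mul_le_mul_left ?_ (show (0 : ℝ) < 2 ^ s.card by positivity)
  rw [mul_left_comm, ← hT_def]
  linarith

theorem resonance_measure_lower_bound_general [Countable ι] {F : ℝ → ℂ} {X : ℝ}
    (hf : ∀ n, 0 ≤ f n) (hfs : Summable f)
    (hF : ∀ x : ℝ, F x = ∑' n, (f n : ℂ) * Complex.exp (2 * π * Complex.I * lam n * x))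
    (s : Finset ι) (hX : 0 < X) (hY : 0 ≤ Y) (hYX : Y ≤ 2 ^ s.card * X) (hV : 0 ≤ V) :
    ENNReal.ofReal ((1 / 2 * ∑ m ∈ s, f m - 2 * (Y / X) * ∑' n, f n - V) * X /
        (2 * sSup ((fun x => ‖F x‖) '' Set.Icc Y (2 ^ s.card * X)))) ≤
      volume {x ∈ Set.Icc Y (2 ^ s.card * X) | V ≤ (F x).re} := by
  obtain rfl : F = trigSeries lam f := funext hF
  have hsup : 0 ≤ sSup ((fun x => ‖trigSeries lam f x‖) '' Set.Icc Y (2 ^ s.card * X)) :=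
    Real.sSup_nonneg (by rintro _ ⟨x, -, rfl⟩; exact norm_nonneg _)
  have herror : 0 ≤ 2 * (Y / X) * ∑' n, f n := mul_nonneg (by positivity) (tsum_nonneg hf)
  refine ENNReal.ofReal_le_of_le_toReal ?_
  rcases le_total V (1 / 2 * ∑ m ∈ s, f m) with hVs | hVs
  · refine div_le_of_le_mul₀ (by positivity) ENNReal.toReal_nonneg ?_
    have hmain := resonance_inequality (lam := lam) hf hfs s hX hY hYX hV hVs
    rw [Measure.real] at hmain
    have herror_mul : 2 * (Y / X) * (∑' n, f n) * X = 2 * (Y * ∑' n, f n) := by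
      field_simp
    linarith
  · exact (div_nonpos_of_nonpos_of_nonneg
      (mul_nonpos_of_nonpos_of_nonneg (by linarith) hX.le) (by positivity)).trans
      ENNReal.toReal_nonneg

end Resonance

section Parameters

variable {M : ℕ} {X Y Q S : ℝ}

lemma one_le_log_of_main_term_pos (hM : 1 ≤ M) (hX : 0 < X) (hY : 1 ≤ Y) (hYX : Y < 2 ^ M * X)
    (hS : 0 ≤ S) (hQS : Q ≤ S) (hpos : 0 < 1 / 4 * Q - 8 * (Y * (M + log X) / X) * S) :
    1 ≤ log X := by
  have hM' : (1 : ℝ) ≤ M := by exact_mod_cast hM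
  have hlog_pos : 0 < M * log 2 + log X := by
    rw [← log_pow, ← log_mul (by positivity) hX.ne']
    exact log_pos (hY.trans_lt hYX)
  have hsum : 0.3 ≤ M + log X := by nlinarith [log_two_lt_d9]
  have hX_large : 32 * (Y * (M + log X)) < X := by
    have hratio : Y * (M + log X) / X < 1 / 32 :=
      lt_of_mul_lt_mul_right (by linarith) hS
    rw [div_lt_iff₀ hX] at hratio
    linarith
  have hprod : 1 * 0.3 ≤ Y * (M + log X) := mul_le_mul hY hsum (by norm_num) (by linarith)
  rw [le_log_iff_exp_le hX]
  linarith [exp_one_lt_d9]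

lemma main_term_div_le {A V : ℝ} (hX : 0 < X) (hY : 0 ≤ Y) (hlog : 1 ≤ log X)
    (hQ : 0 ≤ Q) (hS : 0 ≤ S) (hA : 0 ≤ A)
    (hV : V ≤ 1 / 4 * Q - 8 * (Y * (M + log X) / X) * S) :
    (1 / 4 * Q - 8 * (Y * (M + log X) / X) * S - V) * X / (2 * (M * log 2 + log X) * A) ≤
      (1 / 2 * Q - 2 * (Y / X) * S - V) * X / (2 * A) := by
  have hsum : 1 ≤ M + log X := by linarith [M.cast_nonneg (α := ℝ)]
  have hlogT : 1 ≤ M * log 2 + log X := by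
    linarith [mul_nonneg M.cast_nonneg (log_nonneg one_le_two)]
  have herror : 2 * (Y / X) * S ≤ 8 * (Y * (M + log X) / X) * S := by
    rw [mul_div_right_comm]
    gcongr ?_ * S
    linarith [div_nonneg hY hX.le, le_mul_of_one_le_right (div_nonneg hY hX.le) hsum]
  rw [mul_right_comm 2 _ A, mul_comm (2 * A), ← div_div]
  gcongr ?_ / (2 * A)
  exact (div_le_self (mul_nonneg (sub_nonneg.2 hV) hX.le) hlogT).trans (by gcongr; norm_num)

end Parameters

theorem resonance_measure_lower_bound :
    ∃ C : ℝ, 0 < C ∧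
      ∀ (lam : ℕ → ℝ), (∀ n, 0 ≤ lam n) → StrictMono lam →
      ∀ (f : ℕ → ℝ), (∀ n, 0 ≤ f n) → Summable f →
      ∀ (F : ℝ → ℂ),
        (∀ x : ℝ, F x = ∑' n : ℕ, (f n : ℂ) * Complex.exp (2 * π * Complex.I * lam n * x)) →
      ∀ (M : ℕ), 1 ≤ M →
      ∀ (𝓜 : Finset ℕ), 𝓜.card = M →
      ∀ (X Y : ℝ), 1 ≤ Y → Y < 2 ^ M * X →
      ∀ (Sig : ℝ),
        Sig = (1 / 4) * ∑ m ∈ 𝓜, f m -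
            C * (Y * ((M : ℝ) + Real.log X) / X) * ∑' n : ℕ, f n →
        0 < Sig →
      ∀ (V : ℝ), 0 < V → V ≤ Sig →
        ENNReal.ofReal ((Sig - V) * X /
            (2 * ((M : ℝ) * Real.log 2 + Real.log X) *
              sSup ((fun x => ‖F x‖) '' Set.Icc Y (2 ^ M * X)))) ≤
          volume {x ∈ Set.Icc Y (2 ^ M * X) | V ≤ (F x).re} := by
  refine ⟨8, by norm_num, ?_⟩
  rintro lam - - f hf hfs F hF M hM 𝓜 rfl X Y hY hYX Sig rfl hpos V hV hVSig
  have hX : 0 < X := pos_of_mul_pos_right (by linarith) (by positivity : (0 : ℝ) ≤ 2 ^ 𝓜.card)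
  have hlog : 1 ≤ log X := one_le_log_of_main_term_pos hM hX hY hYX (tsum_nonneg hf)
    (hfs.sum_le_tsum 𝓜 fun n _ => hf n) hpos
  have hsup : 0 ≤ sSup ((fun x => ‖F x‖) '' Set.Icc Y (2 ^ 𝓜.card * X)) :=
    Real.sSup_nonneg (by rintro _ ⟨x, -, rfl⟩; exact norm_nonneg _)
  refine (ENNReal.ofReal_le_ofReal (main_term_div_le hX (by linarith) hlog
    (Finset.sum_nonneg fun n _ => hf n) (tsum_nonneg hf) hsup hVSig)).trans ?_
  exact resonance_measure_lower_bound_general hf hfs hF 𝓜 hX (by linarith) hYX.le hV.le
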